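/- Let U(R) = 10(1+R²/3)^{−2} − (20R²/3)(1+R²/3)^{−3}, let φ(·,ξ) be the generalized eigenfunctions of 𝓛 (φ(0,ξ)=0, ∂_Rφ(0,ξ)=1), and let F(ξ,η) = ∫₀^∞ U(R) φ(R,ξ) φ(R,η) dR. Then for every integer k ≥ 1 there exist smooth functions U^{odd}_{kj} (0 ≤ j ≤ k−1) and U^{even}_{kℓ} (0 ≤ ℓ ≤ k) on [0,∞), with U^{odd}_{kj} odd and U^{even}_{kℓ} even, satisfying the decay bounds (1+R)|U^{odd}_{kj}(R)| + |U^{even}_{kℓ}(R)| ≤ C_k (1+R)^{−4−2k} for all j, ℓ, such that for all ξ, η > 0: (η − ξ)^{2k} F(ξ,η) = ∫₀^∞ [ Σ_{j=0}^{k−1} ξ^j U^{odd}_{kj}(R) ∂_Rφ(R,ξ) + Σ_{ℓ=0}^{k} ξ^ℓ U^{even}_{kℓ}(R) φ(R,ξ) ] φ(R,η) dR. -/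

import Mathlib

open MeasureTheory

noncomputable section

namespace CommutatorIdentity

/-- `U(R) = 10(1+R²/3)^{-2} - (20R²/3)(1+R²/3)^{-3}`, from `[𝓛, R∂_R] = 2𝓛 + U`. -/
def U (R : ℝ) : ℝ := 10 / (1 + R ^ 2 / 3) ^ 2 - (20 * R ^ 2 / 3) / (1 + R ^ 2 / 3) ^ 3


def w (R : ℝ) : ℝ := (1 + R ^ 2 / 3)⁻¹

lemma den_pos (R : ℝ) : 0 < 1 + R ^ 2 / 3 := by positivity

lemma w_pos (R : ℝ) : 0 < w R := inv_pos.mpr (den_pos R)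

lemma w_contDiff : ContDiff ℝ (⊤ : ℕ∞) w := by
  unfold w
  exact ContDiff.inv (by fun_prop) (fun x => (den_pos x).ne')

lemma w_hasDerivAt (R : ℝ) : HasDerivAt w (-(2 / 3) * R * w R ^ 2) R := by
  have h : HasDerivAt (fun R : ℝ => 1 + R ^ 2 / 3) (2 * R / 3) R := by
    simpa using ((hasDerivAt_pow 2 R).div_const 3).const_add 1
  have := h.inv (den_pos R).ne'
  refine this.congr_deriv ?_
  have := (den_pos R).ne'
  unfold w
  field_simp

lemma w_le {R : ℝ} (hR : 0 ≤ R) : w R ≤ 6 / (1 + R) ^ 2 := by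
  unfold w
  rw [inv_eq_one_div, div_le_div_iff₀ (den_pos R) (by positivity)]
  nlinarith [sq_nonneg (R - 1)]

/-- monomials -/
def mon (j i m : ℕ) : ℝ → ℝ → ℝ := fun ξ R => ξ ^ j * (R ^ i * w R ^ m)

def PS (N d : ℕ) : Submodule ℝ (ℝ → ℝ → ℝ) :=
  Submodule.span ℝ {f | ∃ j i m, j < N ∧ i + d ≤ 2 * m ∧ Even (i + d) ∧ f = mon j i m}

lemma mon_mem {N d j i m : ℕ} (h1 : j < N) (h2 : i + d ≤ 2 * m) (h3 : Even (i + d)) :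
    mon j i m ∈ PS N d := Submodule.subset_span ⟨j, i, m, h1, h2, h3, rfl⟩

lemma PS_mono {N N' d d' : ℕ} (hN : N ≤ N') (t : ℕ) (hd : d = d' + 2 * t) : PS N d ≤ PS N' d' := by
  apply Submodule.span_mono
  rintro f ⟨j, i, m, h1, h2, h3, rfl⟩
  refine ⟨j, i, m, by omega, by omega, ?_, rfl⟩
  rw [Nat.even_iff] at *
  omega

lemma PS_mul {N d : ℕ} (i' m' d' : ℕ) (h : i' + d' ≤ 2 * m') (h' : Even (i' + d'))
    {a : ℝ → ℝ → ℝ} (ha : a ∈ PS N d) :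
    (fun ξ R => R ^ i' * w R ^ m' * a ξ R) ∈ PS N (d + d') := by
  unfold PS at ha
  induction ha using Submodule.span_induction with
  | mem x hx =>
    obtain ⟨j, i, m, h1, h2, h3, rfl⟩ := hx
    have : (fun ξ R => R ^ i' * w R ^ m' * mon j i m ξ R) = mon j (i + i') (m + m') := by
      funext ξ R; simp only [mon]; ring
    rw [this]
    refine mon_mem h1 (by omega) ?_
    rw [Nat.even_iff] at *
    omega
  | zero =>
    convert (PS N (d + d')).zero_mem using 1
    funext ξ R; simp
  | add x y _ _ hx hy =>
    convert (PS N (d + d')).add_mem hx hy using 1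
    funext ξ R; simp [mul_add]
  | smul c x _ hx =>
    convert (PS N (d + d')).smul_mem c hx using 1
    funext ξ R; simp only [Pi.smul_apply, smul_eq_mul]; ring

lemma PS_xi {N d : ℕ} {a : ℝ → ℝ → ℝ} (ha : a ∈ PS N d) :
    (fun ξ R => ξ * a ξ R) ∈ PS (N + 1) d := by
  unfold PS at ha
  induction ha using Submodule.span_induction with
  | mem x hx =>
    obtain ⟨j, i, m, h1, h2, h3, rfl⟩ := hx
    have : (fun ξ R => ξ * mon j i m ξ R) = mon (j + 1) i m := by
      funext ξ R; simp only [mon]; ring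
    rw [this]
    exact mon_mem (by omega) h2 h3
  | zero =>
    convert (PS (N + 1) d).zero_mem using 1
    funext ξ R; simp
  | add x y _ _ hx hy =>
    convert (PS (N + 1) d).add_mem hx hy using 1
    funext ξ R; simp [mul_add]
  | smul c x _ hx =>
    convert (PS (N + 1) d).smul_mem c hx using 1
    funext ξ R; simp only [Pi.smul_apply, smul_eq_mul]; ring

lemma PS_deriv {N d : ℕ} {a : ℝ → ℝ → ℝ} (ha : a ∈ PS N d) :
    ∃ a' ∈ PS N (d + 1), ∀ ξ R, HasDerivAt (a ξ) (a' ξ R) R := by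
  unfold PS at ha
  induction ha using Submodule.span_induction with
  | mem x hx =>
    obtain ⟨j, i, m, h1, h2, h3, rfl⟩ := hx
    refine ⟨(i : ℝ) • mon j (i - 1) m + (-(2 / 3) * (m : ℝ)) • mon j (i + 1) (m + 1), ?_, ?_⟩
    · refine Submodule.add_mem _ ?_ ?_
      · rcases Nat.eq_zero_or_pos i with rfl | hi
        · simp
        · refine Submodule.smul_mem _ _ (mon_mem h1 (by omega) ?_)
          rw [Nat.even_iff] at *
          omega
      · refine Submodule.smul_mem _ _ (mon_mem h1 (by omega) ?_)
        rw [Nat.even_iff] at *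
        omega
    · intro ξ R
      have := ((hasDerivAt_pow i R).mul ((w_hasDerivAt R).pow m)).const_mul (ξ ^ j)
      refine this.congr_deriv ?_
      simp only [mon, Pi.add_apply, Pi.smul_apply, smul_eq_mul]
      rcases Nat.eq_zero_or_pos m with rfl | hm
      · simp; ring
      · obtain ⟨m, rfl⟩ := Nat.exists_eq_add_of_lt hm
        simp
        ring
  | zero => exact ⟨0, Submodule.zero_mem _, fun ξ R => hasDerivAt_const _ _⟩
  | add x y _ _ hx hy =>
    obtain ⟨x', hx', hx⟩ := hx
    obtain ⟨y', hy', hy⟩ := hy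
    exact ⟨x' + y', Submodule.add_mem _ hx' hy', fun ξ R => (hx ξ R).add (hy ξ R)⟩
  | smul c x _ hx =>
    obtain ⟨x', hx', hx⟩ := hx
    exact ⟨c • x', Submodule.smul_mem _ _ hx', fun ξ R => (hx ξ R).const_mul c⟩

lemma PS_coef {N d : ℕ} {a : ℝ → ℝ → ℝ} (ha : a ∈ PS N d) :
    ∃ (c : ℕ → ℝ → ℝ) (C : ℝ), 0 ≤ C ∧ (∀ j, ContDiff ℝ (⊤ : ℕ∞) (c j)) ∧
      (∀ j R, c j (-R) = (-1) ^ d * c j R) ∧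
      (∀ j R, 0 ≤ R → |c j R| ≤ C / (1 + R) ^ d) ∧
      ∀ ξ R, a ξ R = ∑ j ∈ Finset.range N, ξ ^ j * c j R := by
  unfold PS at ha
  induction ha using Submodule.span_induction with
  | mem x hx =>
    obtain ⟨j, i, m, h1, h2, h3, rfl⟩ := hx
    refine ⟨fun l => if l = j then fun R => R ^ i * w R ^ m else fun _ => 0, 6 ^ m, by positivity,
      ?_, ?_, ?_, ?_⟩
    · intro l
      beta_reduce
      split_ifs
      · exact (contDiff_id.pow i).mul (w_contDiff.pow m)
      · exact contDiff_const
    · intro l R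
      have hw : w (-R) = w R := by simp [w]
      beta_reduce
      split_ifs
      · beta_reduce
        rw [hw, neg_pow R i]
        have : (-1 : ℝ) ^ i = (-1) ^ d := by
          rw [Nat.even_add] at h3
          by_cases hd : Even d
          · rw [hd.neg_one_pow, (h3.2 hd).neg_one_pow]
          · have hi : ¬ Even i := fun h => hd (h3.1 h)
            rw [Nat.not_even_iff_odd] at hi hd
            rw [hd.neg_one_pow, hi.neg_one_pow]
        rw [this]; ring
      · simp
    · intro l R hR
      beta_reduce
      split_ifs
      · have hp : 0 < 1 + R := by linarith
        have hw := w_pos R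
        rw [abs_of_nonneg (by positivity)]
        calc R ^ i * w R ^ m ≤ (1 + R) ^ i * (6 / (1 + R) ^ 2) ^ m := by
              gcongr
              · linarith
              · exact w_le hR
          _ = 6 ^ m * ((1 + R) ^ i / (1 + R) ^ (2 * m)) := by
              rw [div_pow, ← pow_mul]; ring
          _ ≤ 6 ^ m * (1 / (1 + R) ^ d) := by
              refine mul_le_mul_of_nonneg_left ?_ (by positivity)
              rw [div_le_div_iff₀ (by positivity) (by positivity), ← pow_add, one_mul]
              exact pow_le_pow_right₀ (by linarith) h2
          _ = _ := by ring
      · simp; positivity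
    · intro ξ R
      rw [Finset.sum_eq_single j]
      · simp [mon]
      · intro b _ hb; simp [hb]
      · intro h; simp at h; omega
  | zero => exact ⟨fun _ _ => 0, 0, le_rfl, fun _ => contDiff_const, by simp, by simp, by simp⟩
  | add x y _ _ hx hy =>
    obtain ⟨c, C, hC, h1, h2, h3, h4⟩ := hx
    obtain ⟨c', C', hC', h1', h2', h3', h4'⟩ := hy
    refine ⟨fun j R => c j R + c' j R, C + C', by positivity, fun j => (h1 j).add (h1' j), ?_, ?_, ?_⟩
    · intro j R; simp only [h2, h2']; ring
    · intro j R hR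
      rw [add_div]
      exact (abs_add_le _ _).trans (add_le_add (h3 j R hR) (h3' j R hR))
    · intro ξ R
      simp only [Pi.add_apply, h4, h4', mul_add, Finset.sum_add_distrib]
  | smul t x _ hx =>
    obtain ⟨c, C, hC, h1, h2, h3, h4⟩ := hx
    refine ⟨fun j R => t * c j R, |t| * C, by positivity, fun j => contDiff_const.mul (h1 j),
      ?_, ?_, ?_⟩
    · intro j R; simp only [h2]; ring
    · intro j R hR
      rw [abs_mul, mul_div_assoc]
      exact mul_le_mul_of_nonneg_left (h3 j R hR) (abs_nonneg _)
    · intro ξ R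
      simp only [Pi.smul_apply, smul_eq_mul, h4, Finset.mul_sum]
      exact Finset.sum_congr rfl fun _ _ => by ring

lemma PS_bound {N d : ℕ} {a : ℝ → ℝ → ℝ} (ha : a ∈ PS N d) (ξ : ℝ) :
    ∃ C : ℝ, 0 ≤ C ∧ ∀ R, 0 ≤ R → |a ξ R| ≤ C / (1 + R) ^ d := by
  obtain ⟨c, C, hC, -, -, h3, h4⟩ := PS_coef ha
  refine ⟨∑ j ∈ Finset.range N, |ξ| ^ j * C, by positivity, fun R hR => ?_⟩
  rw [h4, Finset.sum_div]
  refine (Finset.abs_sum_le_sum_abs _ _).trans (Finset.sum_le_sum fun j _ => ?_)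
  rw [abs_mul, abs_pow, mul_div_assoc]
  exact mul_le_mul_of_nonneg_left (h3 j R hR) (by positivity)

lemma PS_odd_zero {N d : ℕ} {a : ℝ → ℝ → ℝ} (ha : a ∈ PS N d) (hd : Odd d) (ξ : ℝ) :
    a ξ 0 = 0 := by
  obtain ⟨c, C, hC, -, h2, h3, h4⟩ := PS_coef ha
  rw [h4]
  refine Finset.sum_eq_zero fun j _ => ?_
  have := h2 j 0
  rw [hd.neg_one_pow, neg_zero] at this
  have : c j 0 = 0 := by linarith
  rw [this, mul_zero]

lemma PS_cont {N d : ℕ} {a : ℝ → ℝ → ℝ} (ha : a ∈ PS N d) (ξ : ℝ) : Continuous (a ξ) := by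
  obtain ⟨a', -, h⟩ := PS_deriv ha
  exact continuous_iff_continuousAt.2 fun R => (h ξ R).continuousAt

lemma PS_bound2 {N d : ℕ} {a : ℝ → ℝ → ℝ} (ha : a ∈ PS N d) (hd : 2 ≤ d) (ξ : ℝ)
    {p q : ℝ → ℝ} {K L : ℝ} (hp : ∀ R, 0 ≤ R → |p R| ≤ K) (hq : ∀ R, 0 ≤ R → |q R| ≤ L) :
    ∃ C : ℝ, 0 ≤ C ∧ ∀ R, 0 ≤ R → |a ξ R * p R * q R| ≤ C * (1 + R ^ 2)⁻¹ := by
  obtain ⟨C, hC, h⟩ := PS_bound ha ξ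
  have hK : 0 ≤ K := (abs_nonneg _).trans (hp 0 le_rfl)
  have hL : 0 ≤ L := (abs_nonneg _).trans (hq 0 le_rfl)
  refine ⟨C * K * L, by positivity, fun R hR => ?_⟩
  have h1 : |a ξ R| ≤ C * (1 + R ^ 2)⁻¹ := by
    refine (h R hR).trans ?_
    rw [div_eq_mul_inv]
    refine mul_le_mul_of_nonneg_left ?_ hC
    apply inv_anti₀ (by positivity)
    calc 1 + R ^ 2 ≤ (1 + R) ^ 2 := by nlinarith
      _ ≤ (1 + R) ^ d := pow_le_pow_right₀ (by linarith) hd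
  rw [abs_mul, abs_mul]
  calc |a ξ R| * |p R| * |q R| ≤ (C * (1 + R ^ 2)⁻¹) * K * L := by
        gcongr
        · exact hp R hR
        · exact hq R hR
    _ = _ := by ring

lemma PS_integrable {N d : ℕ} {a : ℝ → ℝ → ℝ} (ha : a ∈ PS N d) (hd : 2 ≤ d) (ξ : ℝ)
    {p q : ℝ → ℝ} {K L : ℝ} (hp : ∀ R, 0 ≤ R → |p R| ≤ K) (hq : ∀ R, 0 ≤ R → |q R| ≤ L)
    (hpc : Continuous p) (hqc : Continuous q) :
    IntegrableOn (fun R => a ξ R * p R * q R) (Set.Ioi 0) := by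
  obtain ⟨C, hC, h⟩ := PS_bound2 ha hd ξ hp hq
  have hi : IntegrableOn (fun R : ℝ => C * (1 + R ^ 2)⁻¹) (Set.Ioi 0) :=
    (integrable_inv_one_add_sq.const_mul C).integrableOn
  refine Integrable.mono' hi ?_ ?_
  · exact (((PS_cont ha ξ).mul hpc).mul hqc).aestronglyMeasurable
  · filter_upwards [ae_restrict_mem measurableSet_Ioi] with R hR
    exact h R (le_of_lt hR)

lemma PS_tendsto {N d : ℕ} {a : ℝ → ℝ → ℝ} (ha : a ∈ PS N d) (hd : 2 ≤ d) (ξ : ℝ)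
    {p q : ℝ → ℝ} {K L : ℝ} (hp : ∀ R, 0 ≤ R → |p R| ≤ K) (hq : ∀ R, 0 ≤ R → |q R| ≤ L) :
    Filter.Tendsto (fun R => a ξ R * p R * q R) Filter.atTop (nhds 0) := by
  obtain ⟨C, hC, h⟩ := PS_bound2 ha hd ξ hp hq
  have ht : Filter.Tendsto (fun R : ℝ => C * (1 + R ^ 2)⁻¹) Filter.atTop (nhds 0) := by
    have : Filter.Tendsto (fun R : ℝ => 1 + R ^ 2) Filter.atTop Filter.atTop :=
      Filter.tendsto_atTop_add_const_left _ _ (Filter.tendsto_pow_atTop (by norm_num))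
    simpa using this.inv_tendsto_atTop.const_mul C
  refine squeeze_zero_norm' ?_ ht
  filter_upwards [Filter.eventually_ge_atTop 0] with R hR
  exact h R hR

/-- the eigenfunction properties -/
def Eig (ξ : ℝ) (f f' : ℝ → ℝ) : Prop :=
  f 0 = 0 ∧ f' 0 = 1 ∧ (∀ R, HasDerivAt f (f' R) R) ∧
    (∀ R, HasDerivAt f' (-((5 * w R ^ 2 + ξ) * f R)) R)

lemma V_hasDerivAt (R : ℝ) :
    HasDerivAt (fun R => 5 * w R ^ 2) (-(20 / 3) * (R * w R ^ 3)) R := by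
  refine (((w_hasDerivAt R).pow 2).const_mul 5).congr_deriv ?_
  simp
  ring

lemma Eig.bound {ξ : ℝ} (hξ : 0 < ξ) {f f' : ℝ → ℝ} (h : Eig ξ f f') :
    ∃ K : ℝ, (∀ R, 0 ≤ R → |f R| ≤ K) ∧ (∀ R, 0 ≤ R → |f' R| ≤ K) := by
  obtain ⟨h0, h1, h2, h3⟩ := h
  let E : ℝ → ℝ := fun R => f' R ^ 2 + (5 * w R ^ 2 + ξ) * f R ^ 2
  have hE : ∀ R, HasDerivAt E (-(20 / 3) * (R * w R ^ 3) * f R ^ 2) R := by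
    intro R
    have := ((h3 R).pow 2).add (((V_hasDerivAt R).add_const ξ).mul ((h2 R).pow 2))
    refine this.congr_deriv ?_
    simp
    ring
  have hanti : AntitoneOn E (Set.Ici 0) := by
    refine antitoneOn_of_deriv_nonpos (convex_Ici 0)
      (fun R _ => (hE R).continuousAt.continuousWithinAt)
      (fun R _ => (hE R).differentiableAt.differentiableWithinAt) ?_
    intro R hR
    rw [interior_Ici] at hR
    have hR : 0 < R := hR
    have := w_pos R
    rw [(hE R).deriv]
    have : 0 ≤ (R * w R ^ 3) * f R ^ 2 := by positivity
    linarith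
  have hE1 : ∀ R, 0 ≤ R → E R ≤ 1 := by
    intro R hR
    have := hanti (Set.mem_Ici.2 le_rfl) (Set.mem_Ici.2 hR) hR
    simpa [E, h0, h1] using this
  refine ⟨1 + 1 / ξ, fun R hR => ?_, fun R hR => ?_⟩
  · have := hE1 R hR
    simp only [E] at this
    have hw : 0 ≤ 5 * w R ^ 2 * f R ^ 2 := by positivity
    have h4 : ξ * f R ^ 2 ≤ 1 := by nlinarith [sq_nonneg (f' R)]
    have h5 : f R ^ 2 ≤ 1 / ξ := by rw [le_div_iff₀ hξ]; linarith
    have : 0 < 1 / ξ := by positivity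
    apply abs_le_of_sq_le_sq _ (by positivity)
    nlinarith
  · have := hE1 R hR
    simp only [E] at this
    have hw : 0 ≤ (5 * w R ^ 2 + ξ) * f R ^ 2 := by positivity
    have : 0 < 1 / ξ := by positivity
    apply abs_le_of_sq_le_sq _ (by positivity)
    nlinarith

lemma integrable_comb {N M d e : ℕ} {a b : ℝ → ℝ → ℝ} (ha : a ∈ PS N d) (hb : b ∈ PS M e)
    (hd : 2 ≤ d) (he : 2 ≤ e) {ξ η : ℝ} (hξ : 0 < ξ) (hη : 0 < η) {f f' g g' : ℝ → ℝ}
    (hf : Eig ξ f f') (hg : Eig η g g') :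
    IntegrableOn (fun R => (b ξ R * f' R + a ξ R * f R) * g R) (Set.Ioi 0) := by
  obtain ⟨K, hK, hK'⟩ := hf.bound hξ
  obtain ⟨L, hL, hL'⟩ := hg.bound hη
  have cf : Continuous f := continuous_iff_continuousAt.2 fun R => (hf.2.2.1 R).continuousAt
  have cf' : Continuous f' := continuous_iff_continuousAt.2 fun R => (hf.2.2.2 R).continuousAt
  have cg : Continuous g := continuous_iff_continuousAt.2 fun R => (hg.2.2.1 R).continuousAt
  have := (PS_integrable hb he ξ hK' hL cf' cg).add (PS_integrable ha hd ξ hK hL cf cg)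
  refine this.congr (Filter.Eventually.of_forall fun R => ?_)
  simp only [Pi.add_apply]
  ring

lemma step {N M d e : ℕ} {a b : ℝ → ℝ → ℝ} (ha : a ∈ PS N d) (hb : b ∈ PS M e)
    (hd : 2 ≤ d) (he : 2 ≤ e) (ho : Odd e)
    (N' M' d' e' : ℕ) (hN : N ≤ N') (hM : M + 1 ≤ N') (hN' : N ≤ M') (hM' : M ≤ M')
    (t1 t2 t3 t4 : ℕ) (hd1 : d + 2 = d' + 2 * t1) (hd2 : e + 1 = d' + 2 * t2)
    (he1 : d + 1 = e' + 2 * t3) (he2 : e + 2 = e' + 2 * t4)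
    (hd' : 2 ≤ d') (he' : 2 ≤ e') :
    ∃ a₁ ∈ PS N' d', ∃ b₁ ∈ PS M' e', ∀ ξ η : ℝ, 0 < ξ → 0 < η → ∀ f f' g g' : ℝ → ℝ,
      Eig ξ f f' → Eig η g g' →
      (η - ξ) * ∫ R in Set.Ioi (0 : ℝ), (b ξ R * f' R + a ξ R * f R) * g R
        = ∫ R in Set.Ioi (0 : ℝ), (b₁ ξ R * f' R + a₁ ξ R * f R) * g R := by
  obtain ⟨a', ha', Ha⟩ := PS_deriv ha
  obtain ⟨a'', ha'', Ha'⟩ := PS_deriv ha'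
  obtain ⟨b', hb', Hb⟩ := PS_deriv hb
  obtain ⟨b'', hb'', Hb'⟩ := PS_deriv hb'
  let a₁ : ℝ → ℝ → ℝ := -a'' + (10 : ℝ) • (fun ξ R => R ^ 0 * w R ^ 2 * b' ξ R)
    + (2 : ℝ) • (fun ξ R => ξ * b' ξ R) + (-(20 / 3) : ℝ) • (fun ξ R => R ^ 1 * w R ^ 3 * b ξ R)
  let b₁ : ℝ → ℝ → ℝ := (-2 : ℝ) • a' - b''
  have hVb' : (fun ξ R => R ^ 0 * w R ^ 2 * b' ξ R) ∈ PS M (e + 1 + 4) :=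
    PS_mul 0 2 4 (by norm_num) (by decide) hb'
  have hVb : (fun ξ R => R ^ 1 * w R ^ 3 * b ξ R) ∈ PS M (e + 5) :=
    PS_mul 1 3 5 (by norm_num) (by decide) hb
  have hxb : (fun ξ R => ξ * b' ξ R) ∈ PS (M + 1) (e + 1) := PS_xi hb'
  have ha₁ : a₁ ∈ PS N' d' := by
    refine Submodule.add_mem _ (Submodule.add_mem _ (Submodule.add_mem _ ?_ ?_) ?_) ?_
    · exact Submodule.neg_mem _ (PS_mono hN t1 (by omega) ha'')
    · exact Submodule.smul_mem _ _ (PS_mono (by omega) (t2 + 2) (by omega) hVb')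
    · exact Submodule.smul_mem _ _ (PS_mono hM t2 (by omega) hxb)
    · exact Submodule.smul_mem _ _ (PS_mono (by omega) (t2 + 2) (by omega) hVb)
  have hb₁ : b₁ ∈ PS M' e' := by
    refine Submodule.sub_mem _ ?_ ?_
    · exact Submodule.smul_mem _ _ (PS_mono hN' t3 (by omega) ha')
    · exact PS_mono hM' t4 (by omega) hb''
  refine ⟨a₁, ha₁, b₁, hb₁, ?_⟩
  intro ξ η hξ hη f f' g g' hf hg
  have I0 := integrable_comb ha hb hd he hξ hη hf hg
  have I1 := integrable_comb ha₁ hb₁ hd' he' hξ hη hf hg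
  obtain ⟨K, hK, hK'⟩ := hf.bound hξ
  obtain ⟨L, hL, hL'⟩ := hg.bound hη
  obtain ⟨f0, -, hf1, hf2⟩ := hf
  obtain ⟨g0, -, hg1, hg2⟩ := hg
  let W : ℝ → ℝ := fun R => (b ξ R * f' R + a ξ R * f R) * g' R
    - (b' ξ R * f' R + b ξ R * (-((5 * w R ^ 2 + ξ) * f R)) + (a' ξ R * f R + a ξ R * f' R)) * g R
  have hW : ∀ R, HasDerivAt W ((b₁ ξ R * f' R + a₁ ξ R * f R) * g R
      - (η - ξ) * ((b ξ R * f' R + a ξ R * f R) * g R)) R := by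
    intro R
    have hG := ((Hb ξ R).mul (hf2 R)).add ((Ha ξ R).mul (hf1 R))
    have hG' := (((Hb' ξ R).mul (hf2 R)).add ((Hb ξ R).mul
      (((V_hasDerivAt R).add_const ξ).mul (hf1 R)).neg)).add
      (((Ha' ξ R).mul (hf1 R)).add ((Ha ξ R).mul (hf2 R)))
    have := (hG.mul (hg2 R)).sub (hG'.mul (hg1 R))
    refine this.congr_deriv ?_
    simp [a₁, b₁]
    ring
  have hT : Filter.Tendsto W Filter.atTop (nhds 0) := by
    have hwb : (fun ξ R => R ^ 0 * w R ^ 2 * b ξ R) ∈ PS M (e + 4) :=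
      PS_mul 0 2 4 (by norm_num) (by decide) hb
    have T1 := PS_tendsto hb he ξ hK' hL'
    have T2 := PS_tendsto ha hd ξ hK hL'
    have T3 := PS_tendsto hb' (by omega) ξ hK' hL
    have T4 := PS_tendsto hwb (by omega) ξ hK hL
    have T5 := PS_tendsto hb he ξ hK hL
    have T6 := PS_tendsto ha' (by omega) ξ hK hL
    have T7 := PS_tendsto ha hd ξ hK' hL
    have := (((((T1.add T2).sub T3).add (T4.const_mul 5)).add (T5.const_mul ξ)).sub T6).sub T7
    simp only [mul_zero, add_zero, sub_zero] at this
    refine this.congr fun R => ?_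
    simp only [W]
    ring
  have hW0 : W 0 = 0 := by
    simp [W, f0, g0, PS_odd_zero hb ho ξ]
  have := integral_Ioi_of_hasDerivAt_of_tendsto' (a := 0) (fun R _ => hW R)
    (I1.sub (I0.const_mul (η - ξ))) hT
  rw [hW0, integral_sub I1 (I0.const_mul _), integral_const_mul] at this
  linarith

lemma main (k : ℕ) :
    ∃ a ∈ PS (k + 1) (4 + 2 * k), ∃ b ∈ PS k (5 + 2 * k),
      ∀ ξ η : ℝ, 0 < ξ → 0 < η → ∀ f f' g g' : ℝ → ℝ, Eig ξ f f' → Eig η g g' →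
      IntegrableOn (fun R => U R * f R * g R) (Set.Ioi 0) ∧
      (η - ξ) ^ (2 * k) * ∫ R in Set.Ioi (0 : ℝ), U R * f R * g R
        = ∫ R in Set.Ioi (0 : ℝ), (b ξ R * f' R + a ξ R * f R) * g R := by
  induction k with
  | zero =>
    have hU : (10 : ℝ) • mon 0 0 2 + (-(20 / 3) : ℝ) • mon 0 2 3 ∈ PS 1 4 :=
      Submodule.add_mem _ (Submodule.smul_mem _ _ (mon_mem (by norm_num) (by norm_num) (by decide)))
        (Submodule.smul_mem _ _ (mon_mem (by norm_num) (by norm_num) (by decide)))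
    refine ⟨_, hU, 0, Submodule.zero_mem _, ?_⟩
    intro ξ η hξ hη f f' g g' hf hg
    have I := integrable_comb hU (PS 0 5).zero_mem (by norm_num) (by norm_num) hξ hη hf hg
    have heq : ∀ R, ((0 : ℝ → ℝ → ℝ) ξ R * f' R
        + ((10 : ℝ) • mon 0 0 2 + (-(20 / 3) : ℝ) • mon 0 2 3) ξ R * f R) * g R
        = U R * f R * g R := by
      intro R
      simp only [Pi.zero_apply, Pi.add_apply, Pi.smul_apply, smul_eq_mul, mon, U, w]
      have := (den_pos R).ne'
      field_simp
      ring
    simp only [heq] at I ⊢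
    exact ⟨I, by simp⟩
  | succ k ih =>
    obtain ⟨a, ha, b, hb, H⟩ := ih
    obtain ⟨a₁, ha₁, b₁, hb₁, H₁⟩ := step ha hb (by omega) (by omega) ⟨2 + k, by ring⟩
      (k + 1) (k + 1) (6 + 2 * k) (5 + 2 * k) (by omega) (by omega) (by omega) (by omega)
      0 0 0 1 (by omega) (by omega) (by omega) (by omega) (by omega) (by omega)
    obtain ⟨a₂, ha₂, b₂, hb₂, H₂⟩ := step ha₁ hb₁ (by omega) (by omega) ⟨2 + k, by ring⟩
      (k + 1 + 1) (k + 1) (4 + 2 * (k + 1)) (5 + 2 * (k + 1))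
      (by omega) (by omega) (by omega) (by omega)
      1 0 0 0 (by omega) (by omega) (by omega) (by omega) (by omega) (by omega)
    refine ⟨a₂, ha₂, b₂, hb₂, ?_⟩
    intro ξ η hξ hη f f' g g' hf hg
    obtain ⟨I, h⟩ := H ξ η hξ hη f f' g g' hf hg
    refine ⟨I, ?_⟩
    rw [← H₂ ξ η hξ hη f f' g g' hf hg, ← H₁ ξ η hξ hη f f' g g' hf hg, ← h]
    ring

/-- The iterated commutator identity
`(η-ξ)^{2k} F(ξ,η) = ∫₀^∞ [Σ_{j<k} ξ^j U^{odd}_{kj} ∂_Rφ(R,ξ) + Σ_{ℓ≤k} ξ^ℓ U^{even}_{kℓ} φ(R,ξ)] φ(R,η) dR`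
with smooth odd/even weights decaying like `(1+R)^{-4-2k}`. -/
theorem iterated_commutator_identity
    (φ : ℝ → ℝ → ℝ)
    (hφ : ∀ ξ : ℝ,
      φ ξ 0 = 0 ∧ deriv (φ ξ) 0 = 1 ∧
      (∀ R : ℝ, HasDerivAt (φ ξ) (deriv (φ ξ) R) R) ∧
      (∀ R : ℝ, HasDerivAt (deriv (φ ξ)) (deriv (deriv (φ ξ)) R) R) ∧
      (∀ R : ℝ, - deriv (deriv (φ ξ)) R - (5 / (1 + R ^ 2 / 3) ^ 2) * φ ξ R = ξ * φ ξ R))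
    (k : ℕ) (hk : 1 ≤ k) :
    ∃ (Uodd Ueven : ℕ → ℝ → ℝ) (C : ℝ), 0 < C ∧
      -- the weights are smooth, odd resp. even
      (∀ j : ℕ, j ≤ k - 1 → ContDiff ℝ (⊤ : ℕ∞) (Uodd j) ∧ ∀ R : ℝ, Uodd j (-R) = -Uodd j R) ∧
      (∀ l : ℕ, l ≤ k → ContDiff ℝ (⊤ : ℕ∞) (Ueven l) ∧ ∀ R : ℝ, Ueven l (-R) = Ueven l R) ∧
      -- decay bounds
      (∀ R : ℝ, 0 ≤ R → ∀ j : ℕ, j ≤ k - 1 → ∀ l : ℕ, l ≤ k →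
        (1 + R) * |Uodd j R| + |Ueven l R| ≤ C / (1 + R) ^ (4 + 2 * k)) ∧
      -- convergence of both integrals and the identity
      (∀ ξ : ℝ, 0 < ξ → ∀ η : ℝ, 0 < η →
        IntegrableOn (fun R => U R * φ ξ R * φ η R) (Set.Ioi 0) ∧
        IntegrableOn (fun R =>
          ((∑ j ∈ Finset.range k, ξ ^ j * Uodd j R * deriv (φ ξ) R)
            + ∑ l ∈ Finset.range (k + 1), ξ ^ l * Ueven l R * φ ξ R) * φ η R)
          (Set.Ioi 0) ∧
        (η - ξ) ^ (2 * k) * (∫ R in Set.Ioi (0 : ℝ), U R * φ ξ R * φ η R)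
          = ∫ R in Set.Ioi (0 : ℝ),
              ((∑ j ∈ Finset.range k, ξ ^ j * Uodd j R * deriv (φ ξ) R)
                + ∑ l ∈ Finset.range (k + 1), ξ ^ l * Ueven l R * φ ξ R) * φ η R) := by
  have hE : ∀ ξ, Eig ξ (φ ξ) (deriv (φ ξ)) := by
    intro ξ
    obtain ⟨h0, h1, h2, h3, h4⟩ := hφ ξ
    refine ⟨h0, h1, h2, fun R => (h3 R).congr_deriv ?_⟩
    have := h4 R
    have e : 5 / (1 + R ^ 2 / 3) ^ 2 = 5 * w R ^ 2 := by
      simp [w, div_eq_mul_inv]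
    rw [e] at this
    linarith
  obtain ⟨a, ha, b, hb, H⟩ := main k
  obtain ⟨ca, A, hA, a1, a2, a3, a4⟩ := PS_coef ha
  obtain ⟨cb, B, hB, b1, b2, b3, b4⟩ := PS_coef hb
  have heq : ∀ ξ η R, ((∑ j ∈ Finset.range k, ξ ^ j * cb j R * deriv (φ ξ) R)
            + ∑ l ∈ Finset.range (k + 1), ξ ^ l * ca l R * φ ξ R) * φ η R
      = (b ξ R * deriv (φ ξ) R + a ξ R * φ ξ R) * φ η R := by
    intro ξ η R
    rw [a4, b4, Finset.sum_mul, Finset.sum_mul]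
  refine ⟨cb, ca, A + B + 1, by positivity, ?_, ?_, ?_, ?_⟩
  · intro j _
    refine ⟨b1 j, fun R => ?_⟩
    have ho : Odd (5 + 2 * k) := ⟨2 + k, by ring⟩
    rw [b2, ho.neg_one_pow, neg_one_mul]
  · intro j _
    refine ⟨a1 j, fun R => ?_⟩
    have ho : Even (4 + 2 * k) := ⟨2 + k, by ring⟩
    rw [a2, ho.neg_one_pow, one_mul]
  · intro R hR j _ l _
    have hp : 0 < 1 + R := by linarith
    have h1 : (1 + R) * |cb j R| ≤ B / (1 + R) ^ (4 + 2 * k) := by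
      calc (1 + R) * |cb j R| ≤ (1 + R) * (B / (1 + R) ^ (5 + 2 * k)) :=
            mul_le_mul_of_nonneg_left (b3 j R hR) hp.le
        _ = _ := by
            rw [show 5 + 2 * k = (4 + 2 * k) + 1 by ring, pow_succ]
            field_simp
    have h2 := a3 l R hR
    have h3 : 0 ≤ 1 / (1 + R) ^ (4 + 2 * k) := by positivity
    rw [add_div, add_div]
    linarith
  · intro ξ hξ η hη
    obtain ⟨I, h⟩ := H ξ η hξ hη _ _ _ _ (hE ξ) (hE η)
    simp only [heq]
    exact ⟨I, integrable_comb ha hb (by omega) (by omega) hξ hη (hE ξ) (hE η), h⟩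

end CommutatorIdentity
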